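/- Let (X_i)_{i ≥ 1} be i.i.d. nonnegative random variables with distribution function F, and write F̄ = 1 − F; assume F̄(x) > 0 for all x > 0 and that F̄ is regularly varying with index −α for some α > 0, i.e. F̄(tx)/F̄(x) → t^{−α} as x → ∞ for every t > 0. Let k ≥ 0 be an integer and let N be an ℕ-valued random variable independent of (X_i)_{i ≥ 1}, with E[N^{k+1}] < ∞; if α ≥ 1, assume additionally E[N^p] < ∞ for some real p > (k+1)·α. Define the residual sum R⁻ := Σ_{i=1}^{N} X_i − max{Σ_{i ∈ s} X_i : s ⊆ {1,…,N}, #s ≤ k} (the sum of all but the k largest among X_1,…,X_N), and note that X_{N−k:N} > x (the (k+1)-th largest value exceeds x) if and only if #{1 ≤ i ≤ N : X_i > x} ≥ k+1. Then, as x → ∞, P(R⁻ > x)/F̄(x)^{k+1} → E[N·(N−1)⋯(N−k)]/(k+1)! and P(#{1 ≤ i ≤ N : X_i > x} ≥ k+1)/F̄(x)^{k+1} → E[N·(N−1)⋯(N−k)]/(k+1)!; in particular P(Σ_{i=1}^{N−k} X_{i:N} > x) ∼ P(X_{N−k:N} > x) ∼ (E[N^{[k+1]}]/(k+1)!)·F̄(x)^{k+1}.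 -/

import Mathlib

open MeasureTheory Filter Topology

/-!
For a fixed number `n` of summands the residual sum exceeds a large `x` essentially only if `k + 1`
of the summands do: keeping it large with all but `k` summands below `t * x`, `t < 1`, would need
`k + 2` summands of order `x`, an event of smaller order than `F̄(x)^(k+1)`. Hence both
probabilities are equivalent to `C(n, k+1) * F̄(x)^(k+1)`, and independence of `N` turns this into
the claim if the limit may be taken inside the expectation over `N`.

The dominating function is `n ^ p * F̄(x)^(k+1)`. Put `y = x / p`. If at most `k` summands exceed
`y`, the residual sum is at most the sum of the summands truncated at `y`. When `n * q ≤ 1`, where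
`q` dominates `E[min(X, y)] / y`, a Chernoff bound with exponential parameter `-log (n * q) / y`
shows that this sum exceeds `p * y` with probability at most a constant times `(n * q) ^ p`. For
`α < 1` one may take `q` of order `F̄(y)`, so that `p = k + 1` suffices; for `α ≥ 1` one takes
`q = y ^ (-θ)` with `(k + 1) * α / p < θ < 1`.
-/

open ProbabilityTheory Asymptotics
open scoped Finset

section RegularVariation

/-- Regular variation of `F` at infinity with index `ρ` (measurability of `F` is not required).
The tail `F̄` of the theorem has index `-α`. -/
def RegularlyVarying (F : ℝ → ℝ) (ρ : ℝ) : Prop :=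
  ∀ t > 0, Tendsto (fun x ↦ F (t * x) / F x) atTop (𝓝 (t ^ ρ))

lemma forall_ge_of_forall_mem_Icc_of_double {Q : ℝ → Prop} {x₀ : ℝ} (hx₀ : 0 < x₀)
    (base : ∀ x ∈ Set.Icc x₀ (2 * x₀), Q x) (double : ∀ x ≥ x₀, Q x → Q (2 * x)) :
    ∀ x ≥ x₀, Q x := by
  have dyadic (n : ℕ) : ∀ x ∈ Set.Icc x₀ (2 ^ n * (2 * x₀)), Q x := by
    induction n with
    | zero => simpa using base
    | succ n ih =>
      rintro x ⟨hx, hxn⟩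
      rcases le_total x (2 * x₀) with hx2 | hx2
      · exact base x ⟨hx, hx2⟩
      · have hhalf : x / 2 ∈ Set.Icc x₀ (2 ^ n * (2 * x₀)) :=
          ⟨by linarith, by rw [pow_succ] at hxn; linarith⟩
        simpa [mul_div_cancel₀] using double (x / 2) hhalf.1 (ih _ hhalf)
  intro x hx
  obtain ⟨n, hn⟩ := pow_unbounded_of_one_lt (x / (2 * x₀)) one_lt_two
  exact dyadic n x ⟨hx, ((div_lt_iff₀ (by linarith)).1 hn).le⟩

variable {F f g h : ℝ → ℝ} {ρ σ a r : ℝ}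

lemma isBigO_of_doubling (hf : AntitoneOn f (Set.Ioi 0)) (hf₀ : ∀ x > 0, 0 ≤ f x)
    (hg : AntitoneOn g (Set.Ioi 0)) (hg₀ : ∀ x > 0, 0 < g x) (ha : 0 ≤ a) (har : a < r)
    (hfh : ∀ᶠ x in atTop, f (2 * x) ≤ a * f x + h x) (hh : h =O[atTop] g)
    (hgr : ∀ᶠ x in atTop, r * g x ≤ g (2 * x)) :
    f =O[atTop] g := by
  obtain ⟨c, hc, hhg⟩ := hh.exists_nonneg
  obtain ⟨x₀, hx₀⟩ := eventually_atTop.1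
    (hfh.and (hhg.bound.and (hgr.and (eventually_gt_atTop 0))))
  have hx₀pos : 0 < x₀ := (hx₀ x₀ le_rfl).2.2.2
  have hx₀two : (0 : ℝ) < 2 * x₀ := by positivity
  set C := c / (r - a) + f x₀ / g (2 * x₀) with hC
  have hcr : 0 ≤ c / (r - a) := div_nonneg hc (sub_pos.2 har).le
  have hfg : 0 ≤ f x₀ / g (2 * x₀) := div_nonneg (hf₀ _ hx₀pos) (hg₀ _ hx₀two).le
  have hcC : a * C + c ≤ r * C := by
    have : c / (r - a) * (r - a) = c := div_mul_cancel₀ _ (sub_pos.2 har).ne'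
    nlinarith [hC, mul_nonneg hfg (sub_pos.2 har).le]
  have bound : ∀ x ≥ x₀, f x ≤ C * g x := by
    refine forall_ge_of_forall_mem_Icc_of_double hx₀pos (fun x hx ↦ ?_) fun x hx hfx ↦ ?_
    · have hxpos : 0 < x := hx₀pos.trans_le hx.1
      calc f x ≤ f x₀ := hf hx₀pos hxpos hx.1
        _ = f x₀ / g (2 * x₀) * g (2 * x₀) := (div_mul_cancel₀ _ (hg₀ _ hx₀two).ne').symm
        _ ≤ C * g x := mul_le_mul (le_add_of_nonneg_left hcr) (hg hxpos hx₀two hx.2)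
          (hg₀ _ hx₀two).le (add_nonneg hcr hfg)
    · obtain ⟨hf2, hhx, hg2, hxpos⟩ := hx₀ x hx
      rw [Real.norm_eq_abs, Real.norm_of_nonneg (hg₀ x hxpos).le] at hhx
      calc f (2 * x) ≤ a * (C * g x) + c * g x := by
            nlinarith [le_abs_self (h x), mul_le_mul_of_nonneg_left hfx ha]
        _ = (a * C + c) * g x := by ring
        _ ≤ r * C * g x := by gcongr; exact (hg₀ x hxpos).le
        _ = C * (r * g x) := by ring
        _ ≤ C * g (2 * x) := mul_le_mul_of_nonneg_left hg2 (add_nonneg hcr hfg)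
  refine IsBigO.of_bound C (eventually_atTop.2 ⟨x₀, fun x hx ↦ ?_⟩)
  have hxpos := hx₀pos.trans_le hx
  rw [Real.norm_of_nonneg (hf₀ x hxpos), Real.norm_of_nonneg (hg₀ x hxpos).le]
  exact bound x hx

lemma RegularlyVarying.eventually_double_le (hF : RegularlyVarying F ρ)
    (hF₀ : ∀ x > 0, 0 < F x) (ha : 2 ^ ρ < a) : ∀ᶠ x in atTop, F (2 * x) ≤ a * F x := by
  filter_upwards [(hF 2 two_pos).eventually_lt_const ha, eventually_gt_atTop 0] with x hx hx₀
  exact ((div_lt_iff₀ (hF₀ x hx₀)).1 hx).le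

lemma RegularlyVarying.eventually_le_double (hF : RegularlyVarying F ρ)
    (hF₀ : ∀ x > 0, 0 < F x) (hr : r < 2 ^ ρ) : ∀ᶠ x in atTop, r * F x ≤ F (2 * x) := by
  filter_upwards [(hF 2 two_pos).eventually_const_lt hr, eventually_gt_atTop 0] with x hx hx₀
  exact ((lt_div_iff₀ (hF₀ x hx₀)).1 hx).le

lemma RegularlyVarying.isBigO_rpow (hF : RegularlyVarying F ρ)
    (hanti : AntitoneOn F (Set.Ioi 0)) (hF₀ : ∀ x > 0, 0 < F x) (hρσ : ρ < σ) (hσ : σ ≤ 0) :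
    F =O[atTop] (· ^ σ) := by
  obtain ⟨a, ha, haσ⟩ := exists_between (Real.rpow_lt_rpow_of_exponent_lt one_lt_two hρσ)
  refine isBigO_of_doubling (h := 0) hanti (fun x hx ↦ (hF₀ x hx).le)
    (Real.antitoneOn_rpow_Ioi_of_exponent_nonpos hσ) (fun x hx ↦ Real.rpow_pos_of_pos hx σ)
    ((Real.rpow_pos_of_pos two_pos ρ).trans ha).le haσ
    (by simpa using hF.eventually_double_le hF₀ ha) (isBigO_zero _ _) ?_
  filter_upwards [eventually_ge_atTop 0] with x hx
  exact (Real.mul_rpow two_pos.le hx).ge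

lemma RegularlyVarying.rpow_isBigO (hF : RegularlyVarying F ρ)
    (hanti : AntitoneOn F (Set.Ioi 0)) (hF₀ : ∀ x > 0, 0 < F x) (hσρ : σ < ρ) (hσ : σ ≤ 0) :
    (· ^ σ) =O[atTop] F := by
  obtain ⟨r, hσr, hr⟩ := exists_between (Real.rpow_lt_rpow_of_exponent_lt one_lt_two hσρ)
  refine isBigO_of_doubling (h := 0) (Real.antitoneOn_rpow_Ioi_of_exponent_nonpos hσ)
    (fun x hx ↦ (Real.rpow_pos_of_pos hx σ).le) hanti hF₀ (by positivity) hσr ?_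
    (isBigO_zero _ _) (hF.eventually_le_double hF₀ hr)
  filter_upwards [eventually_ge_atTop 0] with x hx
  simp [Real.mul_rpow two_pos.le hx]

lemma RegularlyVarying.isBigO_comp_div (hF : RegularlyVarying F ρ) (hF₀ : ∀ x > 0, 0 < F x)
    {c : ℝ} (hc : 0 < c) : (fun x ↦ F (x / c)) =O[atTop] F := by
  refine isBigO_of_div_tendsto_nhds ?_ (c⁻¹ ^ ρ) ?_
  · filter_upwards [eventually_gt_atTop 0] with x hx hFx
    exact absurd hFx (hF₀ x hx).ne'
  · exact (hF c⁻¹ (inv_pos.2 hc)).congr fun x ↦ by simp [div_eq_inv_mul]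

lemma RegularlyVarying.tendsto_add_div (hF : RegularlyVarying F ρ) (hF₀ : Tendsto F atTop (𝓝 0))
    (k : ℕ) {t u : ℝ} (ht : 0 < t) (hu : 0 < u) (c d : ℝ) :
    Tendsto (fun x ↦ (c * F (t * x) ^ (k + 1) + d * F (u * x) ^ (k + 2)) / F x ^ (k + 1)) atTop
      (𝓝 (c * (t ^ ρ) ^ (k + 1))) := by
  have htail : Tendsto (fun x ↦ F (u * x)) atTop (𝓝 0) :=
    hF₀.comp (tendsto_id.const_mul_atTop hu)
  have := (((hF t ht).pow (k + 1)).const_mul c).add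
    ((((hF u hu).pow (k + 1)).mul htail).const_mul d)
  simp only [mul_zero, add_zero] at this
  exact this.congr fun x ↦ by ring

end RegularVariation

section Tail

variable {ν : Measure ℝ}

lemma tendsto_measureReal_Ioi_atTop [IsFiniteMeasure ν] :
    Tendsto (fun x ↦ ν.real (Set.Ioi x)) atTop (𝓝 0) := by
  have hempty : ⋂ x : ℝ, Set.Ioi x = ∅ :=
    Set.eq_empty_of_forall_notMem fun x hx ↦ lt_irrefl x (Set.mem_iInter.1 hx x)
  have := tendsto_measure_iInter_atTop (μ := ν) (s := fun x : ℝ ↦ Set.Ioi x)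
    (fun x ↦ measurableSet_Ioi.nullMeasurableSet) (fun x y hxy ↦ Set.Ioi_subset_Ioi hxy)
    ⟨0, measure_ne_top _ _⟩
  rw [hempty, measure_empty] at this
  exact (ENNReal.tendsto_toReal ENNReal.zero_ne_top).comp this

lemma antitone_measureReal_Ioi [IsFiniteMeasure ν] : Antitone fun x ↦ ν.real (Set.Ioi x) :=
  fun _ _ hxy ↦ measureReal_mono (Set.Ioi_subset_Ioi hxy)

lemma integrable_min_const [IsFiniteMeasure ν] (hν : ∀ᵐ u ∂ν, 0 ≤ u) {y : ℝ} (hy : 0 ≤ y) :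
    Integrable (fun u ↦ min u y) ν :=
  .of_mem_Icc 0 y (by fun_prop) (hν.mono fun _ hu ↦ ⟨le_min hu hy, min_le_right _ _⟩)

lemma min_two_mul_div_le {u y : ℝ} (hy : 0 < y) :
    min u (2 * y) / (2 * y)
      ≤ 1 / 2 * (min u y / y) + 1 / 2 * (Set.Ioi y).indicator (1 : ℝ → ℝ) u := by
  rcases le_or_gt u y with hu | hu
  · rw [min_eq_left (by linarith), min_eq_left hu, Set.indicator_of_notMem (by simpa using hu)]
    field_simp
    simp
  · rw [min_eq_right hu.le, div_self hy.ne', Set.indicator_of_mem (Set.mem_Ioi.2 hu), Pi.one_apply]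
    calc min u (2 * y) / (2 * y) ≤ 1 := by
          rw [div_le_one (by positivity)]; exact min_le_right _ _
      _ = 1 / 2 * 1 + 1 / 2 * 1 := by norm_num

-- The truncated mean over its level is `E[min(Y, y) / y]`, which is antitone in `y`.
lemma isBigO_truncatedMean_div [IsFiniteMeasure ν] (hν : ∀ᵐ u ∂ν, 0 ≤ u) {q : ℝ → ℝ} {r : ℝ}
    (hq : AntitoneOn q (Set.Ioi 0)) (hq₀ : ∀ x > 0, 0 < q x) (hr : 1 / 2 < r)
    (hqr : ∀ᶠ x in atTop, r * q x ≤ q (2 * x))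
    (hνq : (fun x ↦ ν.real (Set.Ioi x)) =O[atTop] q) :
    (fun y ↦ (∫ u, min u y ∂ν) / y) =O[atTop] q := by
  have hint {y : ℝ} (hy : 0 < y) : Integrable (fun u ↦ min u y / y) ν :=
    (integrable_min_const hν hy.le).div_const y
  simp only [← integral_div]
  refine isBigO_of_doubling (fun y hy z hz hyz ↦ ?_) (fun y hy ↦ ?_) hq hq₀
    (h := fun y ↦ 1 / 2 * ν.real (Set.Ioi y)) one_half_pos.le hr ?_ (hνq.const_mul_left _) hqr
  · rw [Set.mem_Ioi] at hy hz
    refine integral_mono_ae (hint hz) (hint hy) ?_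
    filter_upwards [hν] with u hu
    simp only [← min_div_div_right hy.le, ← min_div_div_right hz.le, div_self hy.ne',
      div_self hz.ne']
    gcongr
  · exact integral_nonneg_of_ae (hν.mono fun u hu ↦ div_nonneg (le_min hu hy.le) hy.le)
  · filter_upwards [eventually_gt_atTop 0] with y hy
    have hind : Integrable ((Set.Ioi y).indicator (1 : ℝ → ℝ)) ν :=
      (integrable_const 1).indicator measurableSet_Ioi
    calc ∫ u, min u (2 * y) / (2 * y) ∂ν
        ≤ ∫ u, 1 / 2 * (min u y / y) + 1 / 2 * (Set.Ioi y).indicator (1 : ℝ → ℝ) u ∂ν :=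
          integral_mono (hint (by positivity)) (((hint hy).const_mul _).add (hind.const_mul _))
            fun u ↦ min_two_mul_div_le hy
      _ = 1 / 2 * ∫ u, min u y / y ∂ν + 1 / 2 * ν.real (Set.Ioi y) := by
          rw [integral_add ((hint hy).const_mul _) (hind.const_mul _), integral_const_mul,
            integral_const_mul, integral_indicator_one measurableSet_Ioi]

end Tail

section ResidualSum

variable {ι : Type*}

/-- The residual sum of the values `v i`, `i ∈ s`: what remains after removing the `k` largest ones.
The removed part is encoded as the largest sum over at most `k` indices, which for `0 ≤ v` is the
sum of the `k` largest values, and the whole sum if `#s ≤ k`. -/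
noncomputable def residualSum (k : ℕ) (s : Finset ι) (v : ι → ℝ) : ℝ :=
  ∑ i ∈ s, v i - sSup {y : ℝ | ∃ t : Finset ι, t ⊆ s ∧ #t ≤ k ∧ y = ∑ i ∈ t, v i}

variable {k : ℕ} {s : Finset ι} {v : ι → ℝ} {x y a b : ℝ}

lemma lt_residualSum_iff [DecidableEq ι] :
    x < residualSum k s v ↔ ∀ t ⊆ s, #t ≤ k → x < ∑ i ∈ s \ t, v i := by
  have hfin : {y : ℝ | ∃ t : Finset ι, t ⊆ s ∧ #t ≤ k ∧ y = ∑ i ∈ t, v i}.Finite := by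
    refine (s.powerset.finite_toSet.image fun t ↦ ∑ i ∈ t, v i).subset ?_
    rintro _ ⟨t, hts, -, rfl⟩
    exact ⟨t, by simpa using hts, rfl⟩
  have hne : {y : ℝ | ∃ t : Finset ι, t ⊆ s ∧ #t ≤ k ∧ y = ∑ i ∈ t, v i}.Nonempty :=
    ⟨_, ∅, Finset.empty_subset s, by simp, rfl⟩
  rw [residualSum, lt_sub_comm, hfin.csSup_lt_iff hne]
  simp only [Set.mem_ofPred_eq, forall_exists_index, and_imp]
  constructor
  · intro h t hts htk
    rw [Finset.sum_sdiff_eq_sub hts]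
    exact lt_sub_comm.1 (h _ t hts htk rfl)
  · rintro h _ t hts htk rfl
    rw [lt_sub_comm, ← Finset.sum_sdiff_eq_sub hts]
    exact h t hts htk

lemma residualSum_empty : residualSum k (∅ : Finset ι) v = 0 := by
  simp [residualSum, Finset.subset_empty]

lemma lt_residualSum_of_lt_card (hv : ∀ i ∈ s, 0 ≤ v i) (h : k + 1 ≤ #{i ∈ s | x < v i}) :
    x < residualSum k s v := by
  classical
  refine lt_residualSum_iff.2 fun t _ htk ↦ ?_
  obtain ⟨i, hi, hit⟩ := Finset.exists_mem_notMem_of_card_lt_card (htk.trans_lt h)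
  obtain ⟨his, hxi⟩ := Finset.mem_filter.1 hi
  exact hxi.trans_le
    (Finset.single_le_sum (fun j hj ↦ hv j (Finset.mem_sdiff.1 hj).1)
      (Finset.mem_sdiff.2 ⟨his, hit⟩))

-- If at most `k` values exceed `y`, removing these leaves a sum of values truncated at `y`.
lemma lt_card_or_lt_sum_min (hv : ∀ i ∈ s, 0 ≤ v i) (hy : 0 ≤ y) (h : x < residualSum k s v) :
    k + 1 ≤ #{i ∈ s | y < v i} ∨ x < ∑ i ∈ s, min (v i) y := by
  classical
  refine or_iff_not_imp_left.2 fun hcard ↦ ?_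
  calc x < ∑ i ∈ s \ {i ∈ s | y < v i}, v i :=
        lt_residualSum_iff.1 h _ (Finset.filter_subset _ _) (by omega)
    _ = ∑ i ∈ s with ¬ y < v i, min (v i) y := by
        rw [← Finset.filter_not]
        exact Finset.sum_congr rfl fun i hi ↦
          (min_eq_left (not_lt.1 (Finset.mem_filter.1 hi).2)).symm
    _ ≤ ∑ i ∈ s, min (v i) y :=
        Finset.sum_le_sum_of_subset_of_nonneg (Finset.filter_subset _ _)
          fun i hi _ ↦ le_min (hv i hi) hy

-- If both counts are smaller, then `k` values can be removed so that at most one of the remaining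
-- values exceeds `b`, and that one is at most `a`.
lemma lt_card_or_lt_card_succ (ha : 0 ≤ a) (hb : 0 ≤ b) (hx : a + #s * b ≤ x)
    (h : x < residualSum k s v) :
    k + 1 ≤ #{i ∈ s | a < v i} ∨ k + 2 ≤ #{i ∈ s | b < v i} := by
  classical
  by_contra! ⟨hka, hkb⟩
  set T := {i ∈ s | b < v i} with hT
  have hsmall : ∑ i ∈ s \ T, v i ≤ #s * b := by
    calc ∑ i ∈ s \ T, v i ≤ #(s \ T) • b := by
          refine Finset.sum_le_card_nsmul _ _ _ fun i hi ↦ ?_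
          simp only [hT, Finset.mem_sdiff, Finset.mem_filter, not_and, not_lt] at hi
          exact hi.2 hi.1
      _ ≤ #s * b := by
          rw [nsmul_eq_mul]
          gcongr
          exact Finset.sdiff_subset
  have hTs : T ⊆ s := Finset.filter_subset _ _
  rcases Nat.lt_or_ge k #T with hkT | hkT
  · obtain ⟨j, hjT, hja⟩ := Finset.exists_mem_notMem_of_card_lt_card (hka.trans_le hkT)
    have hvj : v j ≤ a := by simpa [hTs hjT] using hja
    have := lt_residualSum_iff.1 h (T.erase j) ((T.erase_subset j).trans hTs)
      (by rw [Finset.card_erase_of_mem hjT]; omega)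
    rw [Finset.sdiff_erase (hTs hjT), Finset.sum_insert (by simp [hjT])] at this
    linarith
  · linarith [lt_residualSum_iff.1 h T hTs hkT]

lemma measurableSet_lt_residualSum : MeasurableSet {v : ι → ℝ | x < residualSum k s v} := by
  classical
  simp only [lt_residualSum_iff]
  have hset : {v : ι → ℝ | ∀ t ⊆ s, #t ≤ k → x < ∑ i ∈ s \ t, v i}
      = ⋂ t ∈ s.powerset, ⋂ _ : #t ≤ k, {v | x < ∑ i ∈ s \ t, v i} := by
    ext v
    simp
  rw [hset]
  exact Finset.measurableSet_biInter _ fun t _ ↦ .iInter fun _ ↦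
    measurableSet_lt (by fun_prop) (by fun_prop)

lemma measurableSet_le_card_filter_lt :
    MeasurableSet {v : ι → ℝ | k ≤ #{i ∈ s | x < v i}} := by
  have hcard : Measurable fun v : ι → ℝ ↦ #{i ∈ s | x < v i} := by
    simp only [Finset.card_filter]
    exact Finset.measurable_sum _ fun i _ ↦ Measurable.ite
      (measurableSet_lt measurable_const (measurable_pi_apply i)) measurable_const measurable_const
  exact hcard measurableSet_Ici

end ResidualSum

section Exceedances

variable {Ω ι : Type*} [MeasurableSpace Ω] {P : Measure Ω} {X : ι → Ω → ℝ} {s t : Finset ι}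
  {k : ℕ} {y p : ℝ}

lemma measureReal_forall_mem_eq_prod (hind : iIndepFun X P) {B : ι → Set ℝ}
    (hB : ∀ i ∈ s, MeasurableSet (B i)) :
    P.real {ω | ∀ i ∈ s, X i ω ∈ B i} = ∏ i ∈ s, P.real {ω | X i ω ∈ B i} := by
  simp only [measureReal_def, ← ENNReal.toReal_prod, Set.ofPred_forall]
  exact congrArg ENNReal.toReal (hind.measure_inter_preimage_eq_mul s hB)

lemma measureReal_le_card_filter_le (hind : iIndepFun X P)
    (hp : ∀ i ∈ s, P.real {ω | y < X i ω} ≤ p) :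
    P.real {ω | k ≤ #{i ∈ s | y < X i ω}} ≤ (#s).choose k * p ^ k := by
  have : IsProbabilityMeasure P := hind.isProbabilityMeasure
  have hsub : {ω | k ≤ #{i ∈ s | y < X i ω}}
      ⊆ ⋃ t ∈ s.powersetCard k, {ω | ∀ i ∈ t, y < X i ω} := by
    intro ω hω
    obtain ⟨t, ht, htk⟩ := Finset.exists_subset_card_eq (Set.mem_ofPred_eq ▸ hω)
    simp only [Set.mem_iUnion]
    exact ⟨t, Finset.mem_powersetCard.2 ⟨ht.trans (Finset.filter_subset _ _), htk⟩,
      fun i hi ↦ (Finset.mem_filter.1 (ht hi)).2⟩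
  calc P.real {ω | k ≤ #{i ∈ s | y < X i ω}}
      ≤ ∑ t ∈ s.powersetCard k, P.real {ω | ∀ i ∈ t, y < X i ω} :=
        (measureReal_mono hsub (measure_ne_top _ _)).trans (measureReal_biUnion_finset_le _ _)
    _ ≤ ∑ _t ∈ s.powersetCard k, p ^ k := by
        refine Finset.sum_le_sum fun t ht ↦ ?_
        obtain ⟨hts, rfl⟩ := Finset.mem_powersetCard.1 ht
        calc P.real {ω | ∀ i ∈ t, y < X i ω} = ∏ i ∈ t, P.real {ω | y < X i ω} :=
              measureReal_forall_mem_eq_prod hind fun _ _ ↦ measurableSet_Ioi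
          _ ≤ ∏ _i ∈ t, p :=
              Finset.prod_le_prod (fun _ _ ↦ measureReal_nonneg) fun i hi ↦ hp i (hts hi)
          _ = p ^ #t := Finset.prod_const p
    _ = (#s).choose k * p ^ k := by simp

lemma filter_lt_eq_iff [DecidableEq ι] {v : ι → ℝ} (hts : t ⊆ s) :
    {i ∈ s | y < v i} = t ↔ ∀ i ∈ s, v i ∈ if i ∈ t then Set.Ioi y else Set.Iic y := by
  simp only [Finset.ext_iff, Finset.mem_filter]
  refine forall_congr' fun i ↦ ?_
  by_cases hit : i ∈ t
  · simp [hit, hts hit]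
  · simp [hit]

lemma measurableSet_ite_Ioi_Iic {q : Prop} [Decidable q] :
    MeasurableSet (if q then Set.Ioi y else Set.Iic y) := by
  split_ifs
  exacts [measurableSet_Ioi, measurableSet_Iic]

lemma nullMeasurableSet_filter_lt_eq (hX : ∀ i, AEMeasurable (X i) P) (hts : t ⊆ s) :
    NullMeasurableSet {ω | {i ∈ s | y < X i ω} = t} P := by
  classical
  simp only [filter_lt_eq_iff hts, Set.ofPred_forall]
  exact Finset.nullMeasurableSet_biInter s fun i _ ↦
    (hX i).nullMeasurableSet_preimage measurableSet_ite_Ioi_Iic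

lemma measureReal_filter_lt_eq (hX : ∀ i, AEMeasurable (X i) P) (hind : iIndepFun X P)
    (hp : ∀ i ∈ s, P.real {ω | y < X i ω} = p) (hts : t ⊆ s) :
    P.real {ω | {i ∈ s | y < X i ω} = t} = p ^ #t * (1 - p) ^ (#s - #t) := by
  classical
  have : IsProbabilityMeasure P := hind.isProbabilityMeasure
  have hle : ∀ i ∈ s, P.real {ω | X i ω ≤ y} = 1 - p := by
    intro i hi
    rw [← hp i hi, ← probReal_compl_eq_one_sub₀
      (nullMeasurableSet_lt aemeasurable_const (hX i))]
    congr 1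
    ext ω
    simp
  simp only [filter_lt_eq_iff hts]
  rw [measureReal_forall_mem_eq_prod hind fun _ _ ↦ measurableSet_ite_Ioi_Iic,
    ← Finset.prod_sdiff hts, mul_comm, ← Finset.card_sdiff_of_subset hts]
  congr 1
  · refine Finset.prod_eq_pow_card fun i hi ↦ ?_
    simp only [hi, if_true, Set.mem_Ioi, hp i (hts hi)]
  · refine Finset.prod_eq_pow_card fun i hi ↦ ?_
    simp only [(Finset.mem_sdiff.1 hi).2, if_false, Set.mem_Iic, hle i (Finset.mem_sdiff.1 hi).1]

lemma measureReal_card_filter_lt_eq (hX : ∀ i, AEMeasurable (X i) P) (hind : iIndepFun X P)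
    (hp : ∀ i ∈ s, P.real {ω | y < X i ω} = p) :
    P.real {ω | #{i ∈ s | y < X i ω} = k} = (#s).choose k * (p ^ k * (1 - p) ^ (#s - k)) := by
  have : IsProbabilityMeasure P := hind.isProbabilityMeasure
  have hset : {ω | #{i ∈ s | y < X i ω} = k}
      = ⋃ t ∈ s.powersetCard k, {ω | {i ∈ s | y < X i ω} = t} := by
    ext ω
    simp
  rw [hset, measureReal_biUnion_finset₀, Finset.sum_congr rfl, Finset.sum_const,
    Finset.card_powersetCard, nsmul_eq_mul]
  · intro t ht
    obtain ⟨hts, rfl⟩ := Finset.mem_powersetCard.1 ht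
    exact measureReal_filter_lt_eq hX hind hp hts
  · exact fun t _ u _ htu ↦ Disjoint.aedisjoint <|
      Set.disjoint_left.2 fun ω (ht : _ = t) (hu : _ = u) ↦ htu (ht.symm.trans hu)
  · exact fun t ht ↦ nullMeasurableSet_filter_lt_eq hX (Finset.mem_powersetCard.1 ht).1

end Exceedances

section Chernoff

variable {Ω ι : Type*} [MeasurableSpace Ω] {P : Measure Ω} [IsProbabilityMeasure P]

-- On `[0, b]` the convex function `exp (t * ·)` lies below its chord.
lemma mgf_le_exp_of_mem_Icc {Y : Ω → ℝ} {b : ℝ} (hb : 0 < b) (hYm : AEMeasurable Y P)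
    (hY : ∀ᵐ ω ∂P, Y ω ∈ Set.Icc 0 b) (t : ℝ) :
    mgf Y P t ≤ Real.exp ((Real.exp (t * b) - 1) / b * P[Y]) := by
  have hint : Integrable Y P := .of_mem_Icc 0 b hYm hY
  have chord : ∀ᵐ ω ∂P, Real.exp (t * Y ω) ≤ 1 + (Real.exp (t * b) - 1) / b * Y ω := by
    filter_upwards [hY] with ω ⟨hY₀, hYb⟩
    have hconv := convexOn_exp.2 (Set.mem_univ (t * b)) (Set.mem_univ 0)
      (div_nonneg hY₀ hb.le) (sub_nonneg.2 ((div_le_one hb).2 hYb)) (add_sub_cancel _ _)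
    simp only [smul_eq_mul, mul_zero, add_zero, Real.exp_zero] at hconv
    calc Real.exp (t * Y ω) = Real.exp (Y ω / b * (t * b)) := by congr 1; field_simp
      _ ≤ Y ω / b * Real.exp (t * b) + (1 - Y ω / b) * 1 := hconv
      _ = 1 + (Real.exp (t * b) - 1) / b * Y ω := by ring
  calc mgf Y P t ≤ ∫ ω, (1 + (Real.exp (t * b) - 1) / b * Y ω) ∂P :=
        integral_mono_ae (integrable_exp_mul_of_mem_Icc hYm hY)
          ((integrable_const 1).add (hint.const_mul _)) chord
    _ = (Real.exp (t * b) - 1) / b * P[Y] + 1 := by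
        rw [integral_add (integrable_const 1) (hint.const_mul _), integral_const_mul]
        simp [add_comm]
    _ ≤ Real.exp ((Real.exp (t * b) - 1) / b * P[Y]) := Real.add_one_le_exp _

lemma measureReal_mul_le_sum_le {Y : ι → Ω → ℝ} {s : Finset ι} {b z : ℝ} (hb : 0 < b)
    (hYm : ∀ i, AEMeasurable (Y i) P) (hY : ∀ i, ∀ᵐ ω ∂P, Y i ω ∈ Set.Icc 0 b)
    (hind : iIndepFun Y P) (hz₀ : 0 < z) (hz₁ : z ≤ 1) (m : ℝ) :
    P.real {ω | m * b ≤ ∑ i ∈ s, Y i ω}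
      ≤ Real.exp ((z⁻¹ - 1) / b * ∑ i ∈ s, P[Y i]) * z ^ m := by
  set t := -Real.log z / b with ht
  have htb : Real.exp (t * b) = z⁻¹ := by
    rw [ht, div_mul_cancel₀ _ hb.ne', Real.exp_neg, Real.exp_log hz₀]
  have ht₀ : 0 ≤ t := div_nonneg (neg_nonneg.2 (Real.log_nonpos hz₀.le hz₁)) hb.le
  have hsum : ∀ᵐ ω ∂P, (∑ i ∈ s, Y i) ω ∈ Set.Icc 0 (#s • b) := by
    filter_upwards [(s.eventually_all).2 fun i _ ↦ hY i] with ω hω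
    rw [Finset.sum_apply]
    exact ⟨Finset.sum_nonneg fun i hi ↦ (hω i hi).1,
      Finset.sum_le_card_nsmul _ _ _ fun i hi ↦ (hω i hi).2⟩
  have hmgf : mgf (∑ i ∈ s, Y i) P t ≤ Real.exp ((z⁻¹ - 1) / b * ∑ i ∈ s, P[Y i]) := by
    rw [hind.mgf_sum₀ hYm, Finset.mul_sum, Real.exp_sum, ← htb]
    exact Finset.prod_le_prod (fun i _ ↦ mgf_nonneg)
      fun i _ ↦ mgf_le_exp_of_mem_Icc hb (hYm i) (hY i) t
  calc P.real {ω | m * b ≤ ∑ i ∈ s, Y i ω} = P.real {ω | m * b ≤ (∑ i ∈ s, Y i) ω} := by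
        simp only [Finset.sum_apply]
    _ ≤ Real.exp (-t * (m * b)) * mgf (∑ i ∈ s, Y i) P t :=
        measure_ge_le_exp_mul_mgf _ ht₀
          (integrable_exp_mul_of_mem_Icc (Finset.aemeasurable_sum s fun i _ ↦ hYm i) hsum)
    _ = z ^ m * mgf (∑ i ∈ s, Y i) P t := by
        rw [Real.rpow_def_of_pos hz₀, ht]
        congr 2
        field_simp
    _ ≤ _ := by rw [mul_comm]; gcongr

end Chernoff

section TruncationLevel

variable {ν : Measure ℝ} [IsProbabilityMeasure ν] {α p : ℝ} {k : ℕ}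

lemma exists_truncatedMean_div_isBigO_of_lt_one (hν : ∀ᵐ u ∂ν, 0 ≤ u)
    (hF₀ : ∀ x > 0, 0 < ν.real (Set.Ioi x))
    (hF : RegularlyVarying (fun x ↦ ν.real (Set.Ioi x)) (-α)) (hα : α < 1) (hp : k + 1 ≤ p) :
    ∃ q : ℝ → ℝ, (∀ x > 0, 0 < q x) ∧ (fun y ↦ (∫ u, min u y ∂ν) / y) =O[atTop] q ∧
      (fun y ↦ q y ^ p) =O[atTop] fun y ↦ ν.real (Set.Ioi y) ^ (k + 1) := by
  have hα2 : 1 / 2 < (2 : ℝ) ^ (-α) := by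
    simpa [Real.rpow_neg_one] using Real.rpow_lt_rpow_of_exponent_lt one_lt_two (neg_lt_neg hα)
  obtain ⟨r, hr, hrα⟩ := exists_between hα2
  refine ⟨fun x ↦ ν.real (Set.Ioi x), hF₀,
    isBigO_truncatedMean_div hν (antitone_measureReal_Ioi.antitoneOn _) hF₀ hr
      (hF.eventually_le_double hF₀ hrα) (isBigO_refl _ _), IsBigO.of_bound 1 ?_⟩
  filter_upwards [eventually_gt_atTop 0] with y hy
  rw [Real.norm_of_nonneg (by positivity), Real.norm_of_nonneg (by positivity), one_mul]
  exact_mod_cast Real.rpow_le_rpow_of_exponent_ge (hF₀ y hy) measureReal_le_one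
    (by exact_mod_cast hp : ((k + 1 : ℕ) : ℝ) ≤ p)

lemma exists_truncatedMean_div_isBigO_of_one_le (hν : ∀ᵐ u ∂ν, 0 ≤ u)
    (hF₀ : ∀ x > 0, 0 < ν.real (Set.Ioi x))
    (hF : RegularlyVarying (fun x ↦ ν.real (Set.Ioi x)) (-α)) (hα : 1 ≤ α)
    (hp : (k + 1) * α < p) :
    ∃ q : ℝ → ℝ, (∀ x > 0, 0 < q x) ∧ (fun y ↦ (∫ u, min u y ∂ν) / y) =O[atTop] q ∧
      (fun y ↦ q y ^ p) =O[atTop] fun y ↦ ν.real (Set.Ioi y) ^ (k + 1) := by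
  have hk : (0 : ℝ) < k + 1 := by positivity
  have hp₀ : 0 < p := (by positivity : 0 < (k + 1) * α).trans hp
  obtain ⟨θ, hθ, hθ₁⟩ := exists_between ((div_lt_one hp₀).2 hp)
  have hθ₀ : 0 < θ := (by positivity : 0 < (k + 1) * α / p).trans hθ
  have hα2 : 1 / 2 < (2 : ℝ) ^ (-θ) := by
    simpa [Real.rpow_neg_one] using Real.rpow_lt_rpow_of_exponent_lt one_lt_two (neg_lt_neg hθ₁)
  have hanti := (antitone_measureReal_Ioi (ν := ν)).antitoneOn (Set.Ioi 0)
  refine ⟨fun x ↦ x ^ (-θ), fun x hx ↦ Real.rpow_pos_of_pos hx _,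
    isBigO_truncatedMean_div hν (Real.antitoneOn_rpow_Ioi_of_exponent_nonpos (by linarith))
      (fun x hx ↦ Real.rpow_pos_of_pos hx _) hα2 ?_
      (hF.isBigO_rpow hanti hF₀ (by linarith) (by linarith)), ?_⟩
  · filter_upwards [eventually_ge_atTop 0] with x hx
    exact (Real.mul_rpow two_pos.le hx).ge
  · have hσ : -(θ * p / (k + 1)) < -α := by
      rw [neg_lt_neg_iff, lt_div_iff₀ hk, mul_comm]
      exact (div_lt_iff₀ hp₀).1 hθ
    refine ((hF.rpow_isBigO hanti hF₀ hσ (by linarith)).pow (k + 1)).congr' ?_ .rfl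
    filter_upwards [eventually_ge_atTop 0] with x hx
    rw [← Real.rpow_natCast, ← Real.rpow_mul hx, ← Real.rpow_mul hx]
    congr 1
    push_cast
    field_simp

end TruncationLevel

section Domination

variable {Ω ι : Type*} [MeasurableSpace Ω] {P : Measure Ω} {X : ι → Ω → ℝ} {ν : Measure ℝ}
  {k : ℕ} {s : Finset ι} {y c p q : ℝ}

lemma ae_nonneg_of_hasLaw (hX : ∀ i, HasLaw (X i) ν P) (hν : ∀ᵐ u ∂ν, 0 ≤ u) (i : ι) :
    ∀ᵐ ω ∂P, 0 ≤ X i ω :=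
  ae_of_ae_map (hX i).aemeasurable (by rwa [(hX i).map_eq])

lemma measureReal_le_of_ae_imp [IsFiniteMeasure P] {A B : Set Ω} (h : ∀ᵐ ω ∂P, ω ∈ A → ω ∈ B) :
    P.real A ≤ P.real B :=
  ENNReal.toReal_mono (measure_ne_top P B) (measure_mono_ae h)

lemma measureReal_sum_min_le [IsProbabilityMeasure P] (hX : ∀ i, HasLaw (X i) ν P)
    (hind : iIndepFun X P) (hν : ∀ᵐ u ∂ν, 0 ≤ u) (hy : 0 < y) (hq : 0 < #s * q)
    (hq₁ : #s * q ≤ 1) (hmean : ∫ u, min u y ∂ν ≤ c * (y * q)) (p : ℝ) :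
    P.real {ω | p * y ≤ ∑ i ∈ s, min (X i ω) y} ≤ Real.exp c * (#s * q) ^ p := by
  have hY : ∀ i, ∀ᵐ ω ∂P, min (X i ω) y ∈ Set.Icc 0 y := fun i ↦ by
    filter_upwards [ae_nonneg_of_hasLaw hX hν i] with ω hω
    exact ⟨le_min hω hy.le, min_le_right _ _⟩
  have hYm (i : ι) : AEMeasurable (fun ω ↦ min (X i ω) y) P :=
    (hX i).aemeasurable.min aemeasurable_const
  have hYmean (i : ι) : ∫ ω, min (X i ω) y ∂P = ∫ u, min u y ∂ν :=
    (hX i).integral_comp (f := fun u ↦ min u y) (by fun_prop)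
  have hYind : iIndepFun (fun i ω ↦ min (X i ω) y) P :=
    hind.comp (fun _ u ↦ min u y) fun _ ↦ by fun_prop
  refine (measureReal_mul_le_sum_le hy hYm hY hYind hq hq₁ p).trans ?_
  have hm₀ : 0 ≤ ∫ u, min u y ∂ν := integral_nonneg_of_ae (hν.mono fun u hu ↦ le_min hu hy.le)
  gcongr
  simp only [hYmean, Finset.sum_const, nsmul_eq_mul]
  calc ((#s * q)⁻¹ - 1) / y * (#s * ∫ u, min u y ∂ν)
      ≤ (#s * q)⁻¹ / y * (#s * (c * (y * q))) := by gcongr; linarith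
    _ = c := by
        have hs : (#s : ℝ) ≠ 0 := left_ne_zero_of_mul hq.ne'
        have hq' : q ≠ 0 := right_ne_zero_of_mul hq.ne'
        field_simp

lemma choose_le_rpow {n : ℕ} (hp : k + 1 ≤ p) : (n.choose (k + 1) : ℝ) ≤ (n : ℝ) ^ p := by
  rcases n.eq_zero_or_pos with rfl | hn
  · simpa using Real.rpow_nonneg le_rfl p
  · calc (n.choose (k + 1) : ℝ) ≤ (n : ℝ) ^ (k + 1) := by exact_mod_cast n.choose_le_pow (k + 1)
      _ = (n : ℝ) ^ ((k : ℝ) + 1) := by rw [← Real.rpow_natCast]; norm_cast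
      _ ≤ (n : ℝ) ^ p := Real.rpow_le_rpow_of_exponent_le (by exact_mod_cast hn) hp

lemma measureReal_mul_lt_residualSum_le_of_card_mul_le [IsProbabilityMeasure P]
    (hX : ∀ i, HasLaw (X i) ν P) (hind : iIndepFun X P) (hν : ∀ᵐ u ∂ν, 0 ≤ u) (hy : 0 < y)
    (hq : 0 < #s * q) (hq₁ : #s * q ≤ 1) (hmean : ∫ u, min u y ∂ν ≤ c * (y * q)) (p : ℝ) :
    P.real {ω | p * y < residualSum k s (X · ω)}
      ≤ (#s).choose (k + 1) * ν.real (Set.Ioi y) ^ (k + 1) + Real.exp c * (#s * q) ^ p := by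
  have hsplit : ∀ᵐ ω ∂P, p * y < residualSum k s (X · ω) →
      k + 1 ≤ #{i ∈ s | y < X i ω} ∨ p * y ≤ ∑ i ∈ s, min (X i ω) y := by
    filter_upwards [(s.eventually_all).2 fun i _ ↦ ae_nonneg_of_hasLaw hX hν i] with ω hω h
    exact (lt_card_or_lt_sum_min hω hy.le h).imp_right le_of_lt
  calc P.real {ω | p * y < residualSum k s (X · ω)}
      ≤ P.real {ω | k + 1 ≤ #{i ∈ s | y < X i ω}}
        + P.real {ω | p * y ≤ ∑ i ∈ s, min (X i ω) y} :=
        (measureReal_le_of_ae_imp hsplit).trans (measureReal_union_le _ _)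
    _ ≤ _ := add_le_add
        (measureReal_le_card_filter_le hind fun i _ ↦
          ((hX i).measureReal_eq (p := (y < ·)) measurableSet_Ioi).le)
        (measureReal_sum_min_le hX hind hν hy hq hq₁ hmean p)

lemma measureReal_mul_lt_residualSum_le (hX : ∀ i, HasLaw (X i) ν P)
    (hind : iIndepFun X P) (hν : ∀ᵐ u ∂ν, 0 ≤ u) (hy : 0 < y) (hq : 0 < q) (hc : 0 ≤ c)
    (hmean : ∫ u, min u y ∂ν ≤ c * (y * q)) (hp : k + 1 ≤ p) :
    P.real {ω | p * y < residualSum k s (X · ω)}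
      ≤ (#s : ℝ) ^ p * (ν.real (Set.Ioi y) ^ (k + 1) + Real.exp c * q ^ p) := by
  have : IsProbabilityMeasure P := hind.isProbabilityMeasure
  have hp₀ : 0 < p := (by positivity : (0 : ℝ) < k + 1).trans_le hp
  rcases s.eq_empty_or_nonempty with rfl | hs
  · simp only [residualSum_empty, not_lt_of_gt (mul_pos hp₀ hy), Set.ofPred_false,
      measureReal_empty]
    positivity
  have hsq : 0 < #s * q := mul_pos (by exact_mod_cast hs.card_pos) hq
  have hrpow : (#s : ℝ) ^ p * (Real.exp c * q ^ p) = Real.exp c * (#s * q) ^ p := by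
    rw [Real.mul_rpow (Nat.cast_nonneg _) hq.le]
    ring
  rw [mul_add, hrpow]
  rcases le_total (#s * q) 1 with hsq₁ | hsq₁
  · refine (measureReal_mul_lt_residualSum_le_of_card_mul_le hX hind hν hy hsq hsq₁ hmean
      p).trans ?_
    gcongr
    exact choose_le_rpow hp
  · calc P.real {ω | p * y < residualSum k s (X · ω)} ≤ 1 * 1 := by simp [measureReal_le_one]
      _ ≤ Real.exp c * (#s * q) ^ p := by
          gcongr
          exacts [Real.one_le_exp hc, Real.one_le_rpow hsq₁ hp₀.le]
      _ ≤ _ := le_add_of_nonneg_left (by positivity)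

lemma exists_forall_measureReal_lt_residualSum_le (hX : ∀ i, HasLaw (X i) ν P)
    (hind : iIndepFun X P) (hν : ∀ᵐ u ∂ν, 0 ≤ u) (hp : k + 1 ≤ p) {q : ℝ → ℝ}
    (hq : ∀ x > 0, 0 < q x) (hmean : (fun y ↦ (∫ u, min u y ∂ν) / y) =O[atTop] q)
    (hqF : (fun y ↦ q y ^ p) =O[atTop] fun y ↦ ν.real (Set.Ioi y) ^ (k + 1))
    (hFp : (fun x ↦ ν.real (Set.Ioi (x / p))) =O[atTop] fun x ↦ ν.real (Set.Ioi x)) :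
    ∃ C, ∀ᶠ x in atTop, ∀ s : Finset ι,
      P.real {ω | x < residualSum k s (X · ω)} ≤ #s ^ p * (C * ν.real (Set.Ioi x) ^ (k + 1)) := by
  have hp₀ : 0 < p := (by positivity : (0 : ℝ) < k + 1).trans_le hp
  obtain ⟨c, hc, hmean⟩ := hmean.exists_nonneg
  have hbigO : (fun x ↦ ν.real (Set.Ioi (x / p)) ^ (k + 1) + Real.exp c * q (x / p) ^ p)
      =O[atTop] fun x ↦ ν.real (Set.Ioi x) ^ (k + 1) :=
    ((isBigO_refl _ _).add (hqF.const_mul_left _)).comp_tendsto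
      (tendsto_id.atTop_div_const hp₀) |>.trans (hFp.pow (k + 1))
  obtain ⟨C, hC⟩ := hbigO.bound
  refine ⟨C, ?_⟩
  filter_upwards [hC, (tendsto_id.atTop_div_const hp₀).eventually hmean.bound,
    eventually_gt_atTop 0] with x hCx hmeanx hx s
  have hy : 0 < x / p := div_pos hx hp₀
  have hmean' : ∫ u, min u (x / p) ∂ν ≤ c * (x / p * q (x / p)) := by
    have := (le_abs_self _).trans hmeanx
    rw [id, Real.norm_of_nonneg (hq _ hy).le, div_le_iff₀ hy] at this
    linarith
  calc P.real {ω | x < residualSum k s (X · ω)}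
      = P.real {ω | p * (x / p) < residualSum k s (X · ω)} := by rw [mul_div_cancel₀ x hp₀.ne']
    _ ≤ #s ^ p * (ν.real (Set.Ioi (x / p)) ^ (k + 1) + Real.exp c * q (x / p) ^ p) :=
        measureReal_mul_lt_residualSum_le hX hind hν hy (hq _ hy) hc hmean' hp
    _ ≤ #s ^ p * (C * ν.real (Set.Ioi x) ^ (k + 1)) := by
        gcongr
        refine (le_abs_self _).trans (hCx.trans_eq ?_)
        rw [Real.norm_of_nonneg (by positivity)]

lemma exists_integrable_rpow_forall_measureReal_lt_residualSum_le {Ω' : Type*}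
    [MeasurableSpace Ω'] {Q : Measure Ω'} {N : Ω' → ℕ} {α : ℝ}
    [IsProbabilityMeasure ν] (hX : ∀ i, HasLaw (X i) ν P) (hind : iIndepFun X P)
    (hν : ∀ᵐ u ∂ν, 0 ≤ u) (hF₀ : ∀ x > 0, 0 < ν.real (Set.Ioi x))
    (hF : RegularlyVarying (fun x ↦ ν.real (Set.Ioi x)) (-α))
    (hNk : Integrable (fun ω ↦ (N ω : ℝ) ^ (k + 1)) Q)
    (hNp : 1 ≤ α → ∃ p : ℝ, (k + 1) * α < p ∧ Integrable (fun ω ↦ (N ω : ℝ) ^ p) Q) :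
    ∃ p C : ℝ, Integrable (fun ω ↦ (N ω : ℝ) ^ p) Q ∧ ∀ᶠ x in atTop, ∀ s : Finset ι,
      P.real {ω | x < residualSum k s (X · ω)} ≤ #s ^ p * (C * ν.real (Set.Ioi x) ^ (k + 1)) := by
  obtain ⟨p, q, hp, hNp, hq, hmean, hqF⟩ : ∃ (p : ℝ) (q : ℝ → ℝ), k + 1 ≤ p ∧
      Integrable (fun ω ↦ (N ω : ℝ) ^ p) Q ∧ (∀ x > 0, 0 < q x) ∧
      (fun y ↦ (∫ u, min u y ∂ν) / y) =O[atTop] q ∧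
      (fun y ↦ q y ^ p) =O[atTop] fun y ↦ ν.real (Set.Ioi y) ^ (k + 1) := by
    rcases lt_or_ge α 1 with hα | hα
    · exact ⟨k + 1, _, le_rfl, by exact_mod_cast hNk,
        (exists_truncatedMean_div_isBigO_of_lt_one hν hF₀ hF hα le_rfl).choose_spec⟩
    · obtain ⟨p, hp, hNp⟩ := hNp hα
      exact ⟨p, _, (le_mul_of_one_le_right (by positivity) hα).trans hp.le, hNp,
        (exists_truncatedMean_div_isBigO_of_one_le hν hF₀ hF hα hp).choose_spec⟩
  have hp₀ : 0 < p := (by positivity : (0 : ℝ) < k + 1).trans_le hp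
  obtain ⟨C, hC⟩ := exists_forall_measureReal_lt_residualSum_le hX hind hν hp hq hmean hqF
    (hF.isBigO_comp_div hF₀ hp₀)
  exact ⟨p, C, hNp, hC⟩

end Domination

section FixedSize

variable {Ω ι : Type*} [MeasurableSpace Ω] {P : Measure Ω} {X : ι → Ω → ℝ} {ν : Measure ℝ}
  {k : ℕ} {s : Finset ι} {x a b ρ : ℝ}

lemma tendsto_measureReal_le_card_filter_div (hX : ∀ i, HasLaw (X i) ν P)
    (hind : iIndepFun X P) [IsFiniteMeasure ν] (hF₀ : ∀ x > 0, 0 < ν.real (Set.Ioi x)) (k : ℕ)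
    (s : Finset ι) :
    Tendsto (fun x ↦ P.real {ω | k ≤ #{i ∈ s | x < X i ω}} / ν.real (Set.Ioi x) ^ k) atTop
      (𝓝 ((#s).choose k)) := by
  have : IsProbabilityMeasure P := hind.isProbabilityMeasure
  have hp (x : ℝ) (i : ι) : P.real {ω | x < X i ω} = ν.real (Set.Ioi x) :=
    (hX i).measureReal_eq (p := (x < ·)) measurableSet_Ioi
  have hlower : Tendsto (fun x ↦ (#s).choose k * (1 - ν.real (Set.Ioi x)) ^ (#s - k)) atTop
      (𝓝 ((#s).choose k)) := by
    simpa using ((tendsto_measureReal_Ioi_atTop (ν := ν)).const_sub 1).pow (#s - k)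
      |>.const_mul ((#s).choose k : ℝ)
  refine tendsto_of_tendsto_of_tendsto_of_le_of_le' hlower tendsto_const_nhds ?_ ?_
  · filter_upwards [eventually_gt_atTop 0] with x hx
    rw [le_div_iff₀ (pow_pos (hF₀ x hx) k), mul_assoc, mul_comm (_ ^ _) (_ ^ k),
      ← measureReal_card_filter_lt_eq (fun i ↦ (hX i).aemeasurable) hind fun i _ ↦ hp x i]
    exact measureReal_mono fun ω hω ↦ hω.ge
  · filter_upwards [eventually_gt_atTop 0] with x hx
    rw [div_le_iff₀ (pow_pos (hF₀ x hx) k)]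
    exact measureReal_le_card_filter_le hind fun i _ ↦ (hp x i).le

lemma measureReal_le_card_filter_le_lt_residualSum (hX : ∀ i, HasLaw (X i) ν P)
    [IsFiniteMeasure P] (hν : ∀ᵐ u ∂ν, 0 ≤ u) :
    P.real {ω | k + 1 ≤ #{i ∈ s | x < X i ω}} ≤ P.real {ω | x < residualSum k s (X · ω)} := by
  refine measureReal_le_of_ae_imp ?_
  filter_upwards [(s.eventually_all).2 fun i _ ↦ ae_nonneg_of_hasLaw hX hν i] with ω hω
  exact lt_residualSum_of_lt_card hω

lemma measureReal_lt_residualSum_le (hX : ∀ i, HasLaw (X i) ν P) (hind : iIndepFun X P)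
    (ha : 0 ≤ a) (hb : 0 ≤ b) (hx : a + #s * b ≤ x) :
    P.real {ω | x < residualSum k s (X · ω)}
      ≤ (#s).choose (k + 1) * ν.real (Set.Ioi a) ^ (k + 1)
        + (#s).choose (k + 2) * ν.real (Set.Ioi b) ^ (k + 2) := by
  have : IsProbabilityMeasure P := hind.isProbabilityMeasure
  have hcount (y : ℝ) (m : ℕ) : P.real {ω | m ≤ #{i ∈ s | y < X i ω}}
      ≤ (#s).choose m * ν.real (Set.Ioi y) ^ m :=
    measureReal_le_card_filter_le hind fun i _ ↦
      ((hX i).measureReal_eq (p := (y < ·)) measurableSet_Ioi).le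
  calc P.real {ω | x < residualSum k s (X · ω)}
      ≤ P.real {ω | k + 1 ≤ #{i ∈ s | a < X i ω}}
        + P.real {ω | k + 2 ≤ #{i ∈ s | b < X i ω}} :=
        (measureReal_mono fun ω hω ↦ lt_card_or_lt_card_succ ha hb hx hω).trans
          (measureReal_union_le _ _)
    _ ≤ _ := add_le_add (hcount a _) (hcount b _)

lemma exists_mul_rpow_pow_lt {c : ℝ} (ρ : ℝ) (k : ℕ) {d : ℝ} (hcd : c < d) :
    ∃ t, 0 < t ∧ t < 1 ∧ c * (t ^ ρ) ^ k < d := by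
  have hcont : ContinuousAt (fun t : ℝ ↦ c * (t ^ ρ) ^ k) 1 :=
    ((Real.continuousAt_rpow_const 1 ρ (.inl one_ne_zero)).pow k).const_mul c
  have hlt : ∀ᶠ t in 𝓝[<] (1 : ℝ), c * (t ^ ρ) ^ k < d :=
    nhdsWithin_le_nhds (hcont.eventually_lt_const (by simpa using hcd))
  obtain ⟨t, htd, ht₀, ht₁⟩ := (hlt.and (Ioo_mem_nhdsLT zero_lt_one)).exists
  exact ⟨t, ht₀, ht₁, htd⟩

-- Upper bound: let `k + 1` values exceed `t * x` with `t ↑ 1`; that `k + 2` values exceed a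
-- small multiple of `x` is negligible.
lemma tendsto_measureReal_lt_residualSum_div (hX : ∀ i, HasLaw (X i) ν P)
    (hind : iIndepFun X P) [IsFiniteMeasure ν] (hν : ∀ᵐ u ∂ν, 0 ≤ u)
    (hF₀ : ∀ x > 0, 0 < ν.real (Set.Ioi x))
    (hF : RegularlyVarying (fun x ↦ ν.real (Set.Ioi x)) ρ) (k : ℕ) (s : Finset ι) :
    Tendsto (fun x ↦ P.real {ω | x < residualSum k s (X · ω)} / ν.real (Set.Ioi x) ^ (k + 1))
      atTop (𝓝 ((#s).choose (k + 1))) := by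
  have : IsProbabilityMeasure P := hind.isProbabilityMeasure
  refine tendsto_order.2 ⟨fun c hc ↦ ?_, fun d hd ↦ ?_⟩
  · filter_upwards [(tendsto_measureReal_le_card_filter_div hX hind hF₀ (k + 1)
      s).eventually_const_lt hc] with x hx
    exact hx.trans_le (div_le_div_of_nonneg_right
      (measureReal_le_card_filter_le_lt_residualSum hX hν) (by positivity))
  · obtain ⟨t, ht₀, ht₁, htd⟩ := exists_mul_rpow_pow_lt ρ (k + 1) hd
    set u := (1 - t) / (#s + 1) with hu
    have hu₀ : 0 < u := div_pos (sub_pos.2 ht₁) (by positivity)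
    have hsu : t + #s * u ≤ 1 := by
      have : u * (#s + 1) = 1 - t := div_mul_cancel₀ _ (by positivity)
      linarith
    filter_upwards [(hF.tendsto_add_div tendsto_measureReal_Ioi_atTop k ht₀ hu₀
      ((#s).choose (k + 1)) ((#s).choose (k + 2))).eventually_lt_const htd,
      eventually_gt_atTop 0] with x hx hx₀
    refine lt_of_le_of_lt ?_ hx
    gcongr
    refine measureReal_lt_residualSum_le hX hind (by positivity) (by positivity) ?_
    nlinarith

end FixedSize

section RandomIndex

variable {Ω E β γ : Type*} [MeasurableSpace Ω] {P : Measure Ω} [IsProbabilityMeasure P]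
  [MeasurableSpace E] [MeasurableSpace β] [Countable β] [MeasurableSingletonClass β]
  {V : Ω → E} {N : Ω → β}

lemma measureReal_mem_eq_integral_of_indepFun (hV : AEMeasurable V P) (hN : AEMeasurable N P)
    (hind : IndepFun N V P) {A : β → Set E} (hA : ∀ n, MeasurableSet (A n)) :
    P.real {ω | V ω ∈ A (N ω)} = ∫ ω, P.real {ω' | V ω' ∈ A (N ω)} ∂P := by
  have hS : MeasurableSet {z : β × E | z.2 ∈ A z.1} := by
    have : {z : β × E | z.2 ∈ A z.1} = ⋃ n, {n} ×ˢ A n := by ext; simp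
    rw [this]
    exact .iUnion fun n ↦ (measurableSet_singleton n).prod (hA n)
  have := Measure.isProbabilityMeasure_map (μ := P) hN
  have := Measure.isProbabilityMeasure_map (μ := P) hV
  calc P.real {ω | V ω ∈ A (N ω)}
      = (P.map fun ω ↦ (N ω, V ω)).real {z | z.2 ∈ A z.1} :=
        (map_measureReal_apply_of_aemeasurable (hN.prodMk hV) hS).symm
    _ = ∫ n, (P.map V).real (A n) ∂P.map N := by
        rw [hind.map_prod_eq_prod_map_map hN hV, measureReal_def, Measure.prod_apply hS]
        exact (integral_toReal (measurable_of_countable _).aemeasurable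
          (ae_of_all _ fun n ↦ measure_lt_top _ _)).symm
    _ = ∫ ω, P.real {ω' | V ω' ∈ A (N ω)} ∂P := by
        rw [integral_map hN (measurable_of_countable _).aestronglyMeasurable]
        simp only [map_measureReal_apply_of_aemeasurable hV (hA _)]
        rfl

lemma tendsto_measureReal_mem_div_of_indepFun (hV : AEMeasurable V P) (hN : AEMeasurable N P)
    (hind : IndepFun N V P) {A : β → γ → Set E} (hA : ∀ n x, MeasurableSet (A n x))
    {l : Filter γ} [l.IsCountablyGenerated] {g : γ → ℝ} (hg : ∀ᶠ x in l, 0 < g x) {w ℓ : β → ℝ}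
    (hw : Integrable (fun ω ↦ w (N ω)) P)
    (hbound : ∀ᶠ x in l, ∀ n, P.real {ω | V ω ∈ A n x} ≤ w n * g x)
    (hlim : ∀ n, Tendsto (fun x ↦ P.real {ω | V ω ∈ A n x} / g x) l (𝓝 (ℓ n))) :
    Tendsto (fun x ↦ P.real {ω | V ω ∈ A (N ω) x} / g x) l (𝓝 (∫ ω, ℓ (N ω) ∂P)) := by
  have hmix (x : γ) := measureReal_mem_eq_integral_of_indepFun hV hN hind fun n ↦ hA n x
  simp only [hmix, ← integral_div]
  refine tendsto_integral_filter_of_dominated_convergence _ (.of_forall fun x ↦ ?_) ?_ hw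
    (ae_of_all _ fun ω ↦ hlim (N ω))
  · exact (measurable_of_countable
      fun n ↦ P.real {ω | V ω ∈ A n x} / g x).comp_aemeasurable hN |>.aestronglyMeasurable
  · filter_upwards [hg, hbound] with x hgx hx
    refine ae_of_all _ fun ω ↦ ?_
    rw [Real.norm_of_nonneg (by positivity), div_le_iff₀ hgx]
    exact hx (N ω)

end RandomIndex

section JointIndependence

variable {Ω ι E β : Type*} [MeasurableSpace Ω] {P : Measure Ω} [MeasurableSpace E]
  [MeasurableSpace β] {X : ι → Ω → E} {N : Ω → β}

lemma measure_inter_biInter_eq_mul_prod_of_range [IsProbabilityMeasure P] {X : ℕ → Ω → E}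
    {C : Set Ω}
    (h : ∀ (n : ℕ) (t : ℕ → Set E), (∀ i, MeasurableSet (t i)) →
      P (C ∩ ⋂ i ∈ Finset.range n, X i ⁻¹' t i) = P C * ∏ i ∈ Finset.range n, P (X i ⁻¹' t i))
    (S : Finset ℕ) {t : ℕ → Set E} (ht : ∀ i ∈ S, MeasurableSet (t i)) :
    P (C ∩ ⋂ i ∈ S, X i ⁻¹' t i) = P C * ∏ i ∈ S, P (X i ⁻¹' t i) := by
  classical
  obtain ⟨n, hn⟩ := S.exists_nat_subset_range
  have hS := h n (fun i ↦ if i ∈ S then t i else Set.univ) fun i ↦ by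
    split_ifs with hi
    exacts [ht i hi, .univ]
  have hinter : ⋂ i ∈ Finset.range n, X i ⁻¹' (if i ∈ S then t i else Set.univ)
      = ⋂ i ∈ S, X i ⁻¹' t i := by
    ext ω
    simp only [Set.mem_iInter, Set.mem_preimage]
    exact ⟨fun hω i hi ↦ by simpa [hi] using hω i (hn hi), fun hω i _ ↦ by
      by_cases hi : i ∈ S <;> simp [hi, hω]⟩
  have hprod : ∏ i ∈ Finset.range n, P (X i ⁻¹' (if i ∈ S then t i else Set.univ))
      = ∏ i ∈ S, P (X i ⁻¹' t i) := by
    rw [← Finset.prod_subset hn fun i _ hi ↦ by simp [hi]]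
    exact Finset.prod_congr rfl fun i hi ↦ by rw [if_pos hi]
  rwa [hinter, hprod] at hS

lemma measure_preimage_inter_eq_mul_of_singleton [Countable β] [MeasurableSingletonClass β]
    (hN : Measurable N) {A : Set Ω} {c : ENNReal}
    (h : ∀ j, P (N ⁻¹' {j} ∩ A) = P (N ⁻¹' {j}) * c) {B : Set β} (hB : MeasurableSet B) :
    P (N ⁻¹' B ∩ A) = P (N ⁻¹' B) * c := by
  have : (P.restrict A).map N = c • P.map N := Measure.ext_of_singleton fun j ↦ by
    simp [Measure.map_apply hN, Measure.restrict_apply (hN (measurableSet_singleton j)), h,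
      mul_comm]
  simpa [Measure.map_apply hN hB, Measure.restrict_apply (hN hB), mul_comm] using
    congrArg (· B) this

lemma iIndepFun_of_measure_preimage_inter_eq_mul_prod [IsProbabilityMeasure P]
    (h : ∀ (B : Set β) (S : Finset ι) (t : ι → Set E), MeasurableSet B →
      (∀ i ∈ S, MeasurableSet (t i)) →
      P (N ⁻¹' B ∩ ⋂ i ∈ S, X i ⁻¹' t i) = P (N ⁻¹' B) * ∏ i ∈ S, P (X i ⁻¹' t i)) :
    iIndepFun X P :=
  iIndepFun_iff_measure_inter_preimage_eq_mul.2 fun S t ht ↦ by simpa using h .univ S t .univ ht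

lemma indepFun_of_measure_preimage_inter_eq_mul_prod [IsProbabilityMeasure P]
    (hN : Measurable N) (hX : ∀ i, Measurable (X i))
    (h : ∀ (B : Set β) (S : Finset ι) (t : ι → Set E), MeasurableSet B →
      (∀ i ∈ S, MeasurableSet (t i)) →
      P (N ⁻¹' B ∩ ⋂ i ∈ S, X i ⁻¹' t i) = P (N ⁻¹' B) * ∏ i ∈ S, P (X i ⁻¹' t i)) :
    IndepFun N (fun ω i ↦ X i ω) P := by
  have hpi : IsPiSystem {A : Set Ω | ∃ T ∈ squareCylinders fun _ : ι ↦
      {t : Set E | MeasurableSet t}, (fun ω i ↦ X i ω) ⁻¹' T = A} :=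
    (isPiSystem_squareCylinders (fun _ ↦ MeasurableSpace.isPiSystem_measurableSet)
      fun _ ↦ .univ).comap _
  refine IndepSets.indep hN.comap_le (measurable_pi_iff.2 hX).comap_le
    (@MeasurableSpace.isPiSystem_measurableSet Ω (.comap N inferInstance)) hpi
    (@MeasurableSpace.generateFrom_measurableSet Ω (.comap N inferInstance)).symm
    (by rw [← generateFrom_squareCylinders, MeasurableSpace.comap_generateFrom]; rfl) ?_
  rw [IndepSets_iff]
  rintro - - ⟨B, hB, rfl⟩ ⟨-, ⟨S, t, ht, rfl⟩, rfl⟩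
  have ht' : ∀ i ∈ S, MeasurableSet (t i) := fun i _ ↦ ht i (Set.mem_univ i)
  have hpre : (fun ω i ↦ X i ω) ⁻¹' (S : Set ι).pi t = ⋂ i ∈ S, X i ⁻¹' t i := by
    ext ω
    simp [Set.mem_pi]
  rw [hpre, h B S t hB ht', (iIndepFun_of_measure_preimage_inter_eq_mul_prod
    h).measure_inter_preimage_eq_mul S ht']

lemma iIndepFun_and_indepFun_of_measure_inter_eq_mul_prod [IsProbabilityMeasure P] [Countable β]
    [MeasurableSingletonClass β] {X : ℕ → Ω → E} (hN : Measurable N) (hX : ∀ i, Measurable (X i))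
    (h : ∀ (j : β) (n : ℕ) (t : ℕ → Set E), (∀ i, MeasurableSet (t i)) →
      P (N ⁻¹' {j} ∩ ⋂ i ∈ Finset.range n, X i ⁻¹' t i)
        = P (N ⁻¹' {j}) * ∏ i ∈ Finset.range n, P (X i ⁻¹' t i)) :
    iIndepFun X P ∧ IndepFun N (fun ω i ↦ X i ω) P := by
  have hpre (B : Set β) (S : Finset ℕ) (t : ℕ → Set E) (hB : MeasurableSet B)
      (ht : ∀ i ∈ S, MeasurableSet (t i)) :
      P (N ⁻¹' B ∩ ⋂ i ∈ S, X i ⁻¹' t i) = P (N ⁻¹' B) * ∏ i ∈ S, P (X i ⁻¹' t i) :=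
    measure_preimage_inter_eq_mul_of_singleton hN
      (fun j ↦ measure_inter_biInter_eq_mul_prod_of_range (h j) S ht) hB
  exact ⟨iIndepFun_of_measure_preimage_inter_eq_mul_prod hpre,
    indepFun_of_measure_preimage_inter_eq_mul_prod hN hX hpre⟩

end JointIndependence

section RandomSum

variable {Ω : Type*} [MeasurableSpace Ω] {P : Measure Ω} {X : ℕ → Ω → ℝ}
  {N : Ω → ℕ} {α : ℝ} {k : ℕ}

lemma integral_prod_range_sub_div_factorial (N : Ω → ℕ) (m : ℕ) :
    (∫ ω, ∏ i ∈ Finset.range m, ((N ω : ℝ) - i) ∂P) / m.factorial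
      = ∫ ω, ((N ω).choose m : ℝ) ∂P := by
  rw [← integral_div]
  congr with ω
  rw [← descPochhammer_eval_eq_prod_range, descPochhammer_eval_eq_descFactorial,
    Nat.descFactorial_eq_factorial_mul_choose, Nat.cast_mul,
    mul_div_cancel_left₀ _ (by exact_mod_cast m.factorial_ne_zero)]

lemma tendsto_measureReal_mem_div_of_le_lt_residualSum {ν : Measure ℝ} [IsProbabilityMeasure ν]
    (hX : ∀ i, HasLaw (X i) ν P) (hindX : iIndepFun X P) (hν : ∀ᵐ u ∂ν, 0 ≤ u)
    (hF₀ : ∀ x > 0, 0 < ν.real (Set.Ioi x))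
    (hF : RegularlyVarying (fun x ↦ ν.real (Set.Ioi x)) (-α)) (hN : AEMeasurable N P)
    (hNk : Integrable (fun ω ↦ (N ω : ℝ) ^ (k + 1)) P)
    (hNp : 1 ≤ α → ∃ p : ℝ, (k + 1) * α < p ∧ Integrable (fun ω ↦ (N ω : ℝ) ^ p) P)
    (hindN : IndepFun N (fun ω i ↦ X i ω) P) {A : ℕ → ℝ → Set (ℕ → ℝ)}
    (hA : ∀ n x, MeasurableSet (A n x))
    (hle : ∀ n x, P.real {ω | (X · ω) ∈ A n x}
      ≤ P.real {ω | x < residualSum k (Finset.range n) (X · ω)})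
    (hlim : ∀ n : ℕ, Tendsto (fun x ↦ P.real {ω | (X · ω) ∈ A n x} / ν.real (Set.Ioi x) ^ (k + 1))
      atTop (𝓝 (n.choose (k + 1)))) :
    Tendsto (fun x ↦ P.real {ω | (X · ω) ∈ A (N ω) x} / ν.real (Set.Ioi x) ^ (k + 1)) atTop
      (𝓝 ((∫ ω, ∏ m ∈ Finset.range (k + 1), ((N ω : ℝ) - m) ∂P) / (k + 1).factorial)) := by
  have : IsProbabilityMeasure P := hindX.isProbabilityMeasure
  obtain ⟨p, C, hp, hbound⟩ :=
    exists_integrable_rpow_forall_measureReal_lt_residualSum_le hX hindX hν hF₀ hF hNk hNp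
  rw [integral_prod_range_sub_div_factorial]
  refine tendsto_measureReal_mem_div_of_indepFun (w := fun n ↦ (n : ℝ) ^ p * C)
    (aemeasurable_pi_lambda _ fun i ↦ (hX i).aemeasurable) hN hindN hA
    ((eventually_gt_atTop 0).mono fun x hx ↦ pow_pos (hF₀ x hx) _) (hp.mul_const C)
    (hbound.mono fun x hx n ↦ (hle n x).trans ?_) hlim
  simpa [mul_assoc] using hx (Finset.range n)

theorem stmt_18_general (hXid : ∀ i, IdentDistrib (X i) (X 0) P P) (hX₀ : ∀ᵐ ω ∂P, 0 ≤ X 0 ω)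
    (hindX : iIndepFun X P) (hF₀ : ∀ x > 0, 0 < P.real {ω | x < X 0 ω})
    (hF : RegularlyVarying (fun x ↦ P.real {ω | x < X 0 ω}) (-α)) (hN : AEMeasurable N P)
    (hNk : Integrable (fun ω ↦ (N ω : ℝ) ^ (k + 1)) P)
    (hNp : 1 ≤ α → ∃ p : ℝ, (k + 1) * α < p ∧ Integrable (fun ω ↦ (N ω : ℝ) ^ p) P)
    (hindN : IndepFun N (fun ω i ↦ X i ω) P) :
    Tendsto (fun x ↦ P.real {ω | x < residualSum k (Finset.range (N ω)) (X · ω)}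
        / P.real {ω | x < X 0 ω} ^ (k + 1)) atTop
      (𝓝 ((∫ ω, ∏ m ∈ Finset.range (k + 1), ((N ω : ℝ) - m) ∂P) / (k + 1).factorial)) ∧
    Tendsto (fun x ↦ P.real {ω | k + 1 ≤ #{i ∈ Finset.range (N ω) | x < X i ω}}
        / P.real {ω | x < X 0 ω} ^ (k + 1)) atTop
      (𝓝 ((∫ ω, ∏ m ∈ Finset.range (k + 1), ((N ω : ℝ) - m) ∂P) / (k + 1).factorial)) := by
  have : IsProbabilityMeasure P := hindX.isProbabilityMeasure
  have hX : ∀ i, HasLaw (X i) (P.map (X 0)) P := fun i ↦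
    ⟨(hXid i).aemeasurable_fst, (hXid i).map_eq⟩
  have := Measure.isProbabilityMeasure_map (μ := P) (hX 0).aemeasurable
  have hν : ∀ᵐ u ∂P.map (X 0), 0 ≤ u :=
    (ae_map_iff (hX 0).aemeasurable measurableSet_Ici).2 hX₀
  have hF_eq : ∀ x, P.real {ω | x < X 0 ω} = (P.map (X 0)).real (Set.Ioi x) := fun x ↦
    (hX 0).measureReal_eq (p := (x < ·)) measurableSet_Ioi
  simp only [hF_eq] at hF₀ hF ⊢
  constructor
  · refine tendsto_measureReal_mem_div_of_le_lt_residualSum hX hindX hν hF₀ hF hN hNk hNp hindN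
      (A := fun n x ↦ {v | x < residualSum k (Finset.range n) v})
      (fun _ _ ↦ measurableSet_lt_residualSum) (fun _ _ ↦ le_rfl) fun n ↦ ?_
    simpa using tendsto_measureReal_lt_residualSum_div hX hindX hν hF₀ hF k (Finset.range n)
  · refine tendsto_measureReal_mem_div_of_le_lt_residualSum hX hindX hν hF₀ hF hN hNk hNp hindN
      (A := fun n x ↦ {v | k + 1 ≤ #{i ∈ Finset.range n | x < v i}})
      (fun _ _ ↦ measurableSet_le_card_filter_lt)
      (fun _ _ ↦ measureReal_le_card_filter_le_lt_residualSum hX hν) fun n ↦ ?_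
    simpa using tendsto_measureReal_le_card_filter_div hX hindX hF₀ (k + 1) (Finset.range n)

end RandomSum

/-- Tail equivalence for the residual risk after removing the `k` largest claims
(Proposition 4.4 of the paper): both the residual sum and the `(k+1)`-th largest
order statistic have tail asymptotics `(E[N^{[k+1]}]/(k+1)!)·F̄(x)^{k+1}`. -/
theorem stmt_18
    {Ω : Type*} [MeasurableSpace Ω] (P : Measure Ω) [IsProbabilityMeasure P]
    (X : ℕ → Ω → ℝ) (hXmeas : ∀ i, Measurable (X i)) (hXpos : ∀ i ω, 0 ≤ X i ω)
    (hXid : ∀ i, Measure.map (X i) P = Measure.map (X 0) P)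
    (α : ℝ) (hα : 0 < α)
    (hFpos : ∀ x > (0 : ℝ), 0 < (P {ω | x < X 0 ω}).toReal)
    (hRV : ∀ t > (0 : ℝ), Tendsto (fun x : ℝ =>
      (P {ω | t * x < X 0 ω}).toReal / (P {ω | x < X 0 ω}).toReal) atTop (𝓝 (t ^ (-α))))
    (k : ℕ) (N : Ω → ℕ) (hNmeas : Measurable N)
    (hNmom : Integrable (fun ω => (N ω : ℝ) ^ (k + 1)) P)
    (hNp : 1 ≤ α → ∃ p : ℝ, (k + 1 : ℝ) * α < p ∧
      Integrable (fun ω => (N ω : ℝ) ^ p) P)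
    (hIndep : ∀ (j n : ℕ) (B : ℕ → Set ℝ), (∀ i, MeasurableSet (B i)) →
      P ({ω | N ω = j} ∩ ⋂ i ∈ Finset.range n, {ω | X i ω ∈ B i})
        = P {ω | N ω = j} * ∏ i ∈ Finset.range n, P {ω | X i ω ∈ B i}) :
    Tendsto (fun x : ℝ =>
        (P {ω | x < (∑ i ∈ Finset.range (N ω), X i ω) -
            sSup {y : ℝ | ∃ s : Finset ℕ,
              s ⊆ Finset.range (N ω) ∧ s.card ≤ k ∧ y = ∑ i ∈ s, X i ω}}).toReal /
          (P {ω | x < X 0 ω}).toReal ^ (k + 1))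
      atTop
      (𝓝 ((∫ ω, ∏ m ∈ Finset.range (k + 1), ((N ω : ℝ) - (m : ℝ)) ∂P) /
        (Nat.factorial (k + 1) : ℝ)))
    ∧ Tendsto (fun x : ℝ =>
        (P {ω | k + 1 ≤ ((Finset.range (N ω)).filter (fun i => x < X i ω)).card}).toReal /
          (P {ω | x < X 0 ω}).toReal ^ (k + 1))
      atTop
      (𝓝 ((∫ ω, ∏ m ∈ Finset.range (k + 1), ((N ω : ℝ) - (m : ℝ)) ∂P) /
        (Nat.factorial (k + 1) : ℝ))) := by
  obtain ⟨hindX, hindN⟩ := iIndepFun_and_indepFun_of_measure_inter_eq_mul_prod hNmeas hXmeas hIndep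
  exact stmt_18_general (fun i ↦ ⟨(hXmeas i).aemeasurable, (hXmeas 0).aemeasurable, hXid i⟩)
    (ae_of_all P (hXpos 0)) hindX hFpos hRV hNmeas.aemeasurable hNmom hNp hindN
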